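/- Let k ≥ 3 be an integer and let G be a finite group of odd order. Then there are infinitely many positive integers v for which there exists a 2-(v,k,1)-design whose automorphism group contains a subgroup isomorphic to G. -/

import Mathlib

/-!
Write `n = |G|` and let `m` be the number of pairs `i < j` in `Fin k`. Take a large prime
`p = 2 * m * n * r + 1`, put `F = ZMod p` and let `G` act on `V = F ^ G` by the regular
representation. The design has point set `V`; since `p` is arbitrarily large, so is `p ^ n`.

The blocks are the sets `{u + b i • w | i}` with `u ∈ V` and `w ∈ W`, for a suitable base block
`b : Fin k → F` and a `G`-invariant set `W` of nonzero vectors. They form a design as soon as every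
nonzero `z ∈ V` is `(b j - b i) • w` for exactly one ordered pair `i ≠ j` and `w ∈ W`
(`exists_design`).

* **The base block.** The `m` differences `b j - b i`, `i < j`, are required to represent each
  multiplicative residue class modulo `m`-th powers exactly once (`exists_base_block`). Such `b`
  exist for large `p` since the classes behave quasirandomly: the second moment of the number of
  `a ∈ A` with `a - x` in a given class is controlled because `x ↦ (a - x) / (a' - x)` is injective
  (`sum_sq_le`), so the `b i` can be chosen greedily (`exists_embedding`).
* **Tiling the scalars.** As `n` is odd, the group of `m`-th powers is a disjoint union `T ∪ -T` with
  `T` closed under multiplication by `n`-th roots of unity; the `±(b j - b i)` then tile `F \ {0}` by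
  translates of `T` (`exists_tiling`).
* **Tiling the vectors.** Choose a representative `d` of each orbit of nonzero vectors under scalars
  and `G`, and let `W` consist of all `t • g d` with `t ∈ T`. If `g` maps the line of `d` to itself, it
  scales `d` by an `n`-th root of unity, which `T` absorbs, so `W` meets this line in `T d` exactly
  (`exists_directions`).
-/

/-- A `2`-`(v,k,1)` design on a point type `α` (with `v` the cardinality of `α`):
a collection of `k`-element subsets (blocks) such that any two distinct points
lie in exactly one block. -/
structure Design (α : Type) [DecidableEq α] (k : ℕ) where
  blocks : Finset (Finset α)
  blockSize : ∀ B ∈ blocks, B.card = k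
  pairCover : ∀ x y : α, x ≠ y → ∃! B, B ∈ blocks ∧ x ∈ B ∧ y ∈ B

/-- `g` is an automorphism of the design `D`: it permutes the point set and maps
the collection of blocks onto itself. -/
def IsAuto {α : Type} [DecidableEq α] {k : ℕ} (D : Design α k)
    (g : Equiv.Perm α) : Prop :=
  ∀ B : Finset α, B ∈ D.blocks ↔ B.image g ∈ D.blocks

/-! ### Quasirandomness of the power residue classes -/

section Residues

variable {F : Type} [Field F] [Fintype F] [DecidableEq F]

lemma card_pow_eq_one_le {e : ℕ} (he : 0 < e) :
    (Finset.univ.filter fun x : F => x ^ e = 1).card ≤ e := by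
  have h : (Finset.univ.filter fun x : F => x ^ e = 1) = Polynomial.nthRootsFinset e (1 : F) := by
    ext x; simp [Polynomial.mem_nthRootsFinset he]
  rw [h, Polynomial.nthRootsFinset_def]
  exact (Multiset.toFinset_card_le _).trans (Polynomial.card_nthRoots e 1)

/-- Only few points see two distinct given points in the same residue class: the Möbius map
`x ↦ (a - x) / (a' - x)` embeds them into the `e`-th roots of unity other than `1`. -/
lemma card_same_class_le {e : ℕ} (he : 0 < e) {a a' : F} (h : a ≠ a') :
    (Finset.univ.filter fun x : F => (a - x) ^ e = (a' - x) ^ e ∧ x ≠ a).card ≤ e - 1 := by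
  have h1 : ((Finset.univ.filter fun x : F => x ^ e = 1).erase 1).card ≤ e - 1 := by
    rw [Finset.card_erase_of_mem (by simp)]
    have := card_pow_eq_one_le (F := F) he
    omega
  refine le_trans (Finset.card_le_card_of_injOn (fun x => (a - x) / (a' - x)) ?_ ?_) h1
  · intro x hx
    simp only [Finset.coe_filter, Finset.mem_univ, true_and, Set.mem_ofPred_eq] at hx
    obtain ⟨hx, hxa⟩ := hx
    have h2 : a - x ≠ 0 := sub_ne_zero.2 (Ne.symm hxa)
    have h3 : a' - x ≠ 0 := by
      intro h0
      rw [h0, zero_pow he.ne'] at hx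
      exact h2 (pow_eq_zero_iff he.ne' |>.1 hx)
    simp only [Finset.coe_erase, Finset.coe_filter, Finset.mem_univ, true_and, Set.mem_sdiff,
      Set.mem_ofPred_eq, Set.mem_singleton_iff]
    refine ⟨by rw [div_pow, hx, div_self (pow_ne_zero _ h3)], ?_⟩
    rw [div_eq_one_iff_eq h3]
    intro h4
    exact h (sub_left_injective h4)
  · intro x hx y hy hxy
    simp only [Finset.coe_filter, Finset.mem_univ, true_and, Set.mem_ofPred_eq] at hx hy
    have key : ∀ z : F, (a - z) ^ e = (a' - z) ^ e → z ≠ a → a' - z ≠ 0 := by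
      intro z hz hza h0
      rw [h0, zero_pow he.ne'] at hz
      exact sub_ne_zero.2 (Ne.symm hza) (pow_eq_zero_iff he.ne' |>.1 hz)
    have h3 := key x hx.1 hx.2
    have h4 := key y hy.1 hy.2
    simp only at hxy
    rw [div_eq_div_iff h3 h4] at hxy
    have : (a - a') * (x - y) = 0 := by linear_combination hxy
    rcases mul_eq_zero.1 this with h5 | h5
    · exact absurd (sub_eq_zero.1 h5) h
    · exact sub_eq_zero.1 h5

/-- The second moment estimate: the number of `a ∈ A` whose difference from `x` lies in a
prescribed residue class has, over random `x`, mean about `#A / m` and small variance. -/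
lemma sum_sq_le {m e : ℕ} (hm : 0 < m) (he : 0 < e) (hq : Fintype.card F = m * e + 1)
    (A : Finset F) :
    ∑ x : F, ∑ γ ∈ Finset.univ.filter (fun γ : F => γ ^ m = 1),
      ((m : ℤ) * (A.filter fun a => (a - x) ^ e = γ).card - A.card) ^ 2
      ≤ 2 * m ^ 2 * A.card * Fintype.card F := by
  set Γ := Finset.univ.filter (fun γ : F => γ ^ m = 1) with hΓ
  have hcl : ∀ y : F, y ^ e ∈ Γ ↔ y ≠ 0 := by
    intro y
    simp only [hΓ, Finset.mem_filter, Finset.mem_univ, true_and]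
    constructor
    · rintro h rfl
      rw [zero_pow he.ne', zero_pow hm.ne'] at h
      exact zero_ne_one h
    · intro h
      rw [← pow_mul, mul_comm, show m * e = Fintype.card F - 1 by omega]
      exact FiniteField.pow_card_sub_one_eq_one y h
  have hN : ∀ x γ : F, ((A.filter fun a => (a - x) ^ e = γ).card : ℤ)
      = ∑ a ∈ A, if (a - x) ^ e = γ then 1 else 0 := by
    intro x γ; simp
  have hS1 : ∑ x : F, ∑ γ ∈ Γ, ((A.filter fun a => (a - x) ^ e = γ).card : ℤ)
      = A.card * (m * e : ℕ) := by
    simp_rw [hN]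
    have h1 : ∀ x : F, ∑ γ ∈ Γ, ∑ a ∈ A, (if (a - x) ^ e = γ then (1 : ℤ) else 0)
        = ∑ a ∈ A, if x ≠ a then 1 else 0 := by
      intro x
      rw [Finset.sum_comm]
      refine Finset.sum_congr rfl fun a _ => ?_
      rw [Finset.sum_ite_eq]
      simp only [hcl, sub_ne_zero, ne_comm]
    simp_rw [h1]
    rw [Finset.sum_comm]
    have h2 : ∀ a : F, ∑ x : F, (if x ≠ a then (1 : ℤ) else 0) = (m * e : ℕ) := by
      intro a
      rw [Finset.sum_boole, Finset.filter_ne', Finset.card_erase_of_mem (Finset.mem_univ _),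
        Finset.card_univ, hq]
      simp
    simp_rw [h2]
    simp
  have hS2 : ∑ x : F, ∑ γ ∈ Γ, ((A.filter fun a => (a - x) ^ e = γ).card : ℤ) ^ 2
      ≤ A.card * (m * e) + A.card * (A.card - 1) * (e - 1) := by
    simp_rw [hN, sq, Finset.sum_mul_sum]
    have h1 : ∀ x : F, ∑ γ ∈ Γ, ∑ a ∈ A, ∑ a' ∈ A,
        ((if (a - x) ^ e = γ then (1 : ℤ) else 0) * if (a' - x) ^ e = γ then 1 else 0)
        = ∑ a ∈ A, ∑ a' ∈ A, if (a - x) ^ e = (a' - x) ^ e ∧ x ≠ a then 1 else 0 := by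
      intro x
      rw [Finset.sum_comm]
      refine Finset.sum_congr rfl fun a _ => ?_
      rw [Finset.sum_comm]
      refine Finset.sum_congr rfl fun a' _ => ?_
      simp only [ite_mul, one_mul, zero_mul]
      rw [Finset.sum_ite_eq]
      simp only [hcl, sub_ne_zero, ne_comm (a := a), ite_and, eq_comm (a := (a - x) ^ e)]
      split_ifs <;> rfl
    simp_rw [h1]
    rw [Finset.sum_comm]
    have h2 : ∀ a ∈ A, ∑ x : F, ∑ a' ∈ A,
        (if (a - x) ^ e = (a' - x) ^ e ∧ x ≠ a then (1 : ℤ) else 0)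
        ≤ (m * e) + (A.card - 1) * (e - 1) := by
      intro a ha
      rw [Finset.sum_comm, ← Finset.add_sum_erase _ _ ha]
      refine add_le_add ?_ ?_
      · rw [Finset.sum_boole]
        simp only [true_and]
        rw [Finset.filter_ne', Finset.card_erase_of_mem (Finset.mem_univ _),
          Finset.card_univ, hq]
        simp
      · have h3 : ∀ a' ∈ A.erase a, ∑ x : F,
            (if (a - x) ^ e = (a' - x) ^ e ∧ x ≠ a then (1 : ℤ) else 0) ≤ (e - 1 : ℤ) := by
          intro a' ha'
          rw [Finset.sum_boole]
          have := card_same_class_le he (Finset.ne_of_mem_erase ha').symm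
          omega
        refine (Finset.sum_le_card_nsmul _ _ _ h3).trans ?_
        rw [Finset.card_erase_of_mem ha, nsmul_eq_mul,
          Nat.cast_pred (Finset.card_pos.2 ⟨a, ha⟩)]
    refine (Finset.sum_le_card_nsmul _ _ _ h2).trans (le_of_eq ?_)
    rw [nsmul_eq_mul]; ring
  have hexp : ∑ x : F, ∑ γ ∈ Γ,
      ((m : ℤ) * (A.filter fun a => (a - x) ^ e = γ).card - A.card) ^ 2
      = m ^ 2 * ∑ x : F, ∑ γ ∈ Γ, ((A.filter fun a => (a - x) ^ e = γ).card : ℤ) ^ 2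
        - 2 * m * A.card * ∑ x : F, ∑ γ ∈ Γ, ((A.filter fun a => (a - x) ^ e = γ).card : ℤ)
        + Fintype.card F * Γ.card * A.card ^ 2 := by
    have : ∀ x γ : F, ((m : ℤ) * (A.filter fun a => (a - x) ^ e = γ).card - A.card) ^ 2
        = m ^ 2 * ((A.filter fun a => (a - x) ^ e = γ).card : ℤ) ^ 2
        - 2 * m * A.card * ((A.filter fun a => (a - x) ^ e = γ).card : ℤ) + A.card ^ 2 := by
      intros; ring
    simp_rw [this, Finset.sum_add_distrib, Finset.sum_sub_distrib, Finset.mul_sum]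
    simp only [Finset.sum_const, Finset.card_univ, nsmul_eq_mul]
    ring
  have hΓm : (Γ.card : ℤ) ≤ m := by exact_mod_cast card_pow_eq_one_le (F := F) hm
  have hAq : (A.card : ℤ) ≤ Fintype.card F := by exact_mod_cast Finset.card_le_univ A
  rw [hexp, hS1]
  rw [hq] at hAq ⊢
  push_cast at hAq ⊢
  have hA0 : (0 : ℤ) ≤ A.card := by positivity
  generalize (A.card : ℤ) = a at *
  have hm1 : (1 : ℤ) ≤ m := by exact_mod_cast hm
  have he1 : (1 : ℤ) ≤ e := by exact_mod_cast he
  generalize (m : ℤ) = M at *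
  generalize (e : ℤ) = E at *
  have h1 := mul_le_mul_of_nonneg_left hS2 (sq_nonneg M)
  have h2 : (M * E + 1) * (Γ.card : ℤ) * a ^ 2 ≤ (M * E + 1) * M * a ^ 2 := by gcongr
  have h3 : M * a * a ≤ M * a * (M * E + 1) := by gcongr
  have h4 : M * a * (M * E + 1) ≤ M * M * a * (M * E + 1) := by
    have : 0 ≤ M * a * (M * E + 1) := by positivity
    nlinarith
  have h5 : 0 ≤ M ^ 2 * a ^ 2 := by positivity
  have h6 : 0 ≤ M * a * (M * E) := by positivity
  nlinarith

/-- Few points `x` have substantially fewer neighbours in `A` than expected. -/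
lemma card_bad_mul_le {m e : ℕ} (hm : 0 < m) (he : 0 < e) (hq : Fintype.card F = m * e + 1)
    (A : Finset F) {γ : F} (hγ : γ ^ m = 1) :
    (Finset.univ.filter fun x : F =>
      2 * m * (A.filter fun a => (a - x) ^ e = γ).card < A.card).card * A.card
      ≤ 8 * m ^ 2 * Fintype.card F := by
  rcases Nat.eq_zero_or_pos A.card with h0 | hA
  · simp [h0]
  set X := Finset.univ.filter fun x : F =>
      2 * m * (A.filter fun a => (a - x) ^ e = γ).card < A.card with hX
  have h1 := sum_sq_le hm he hq A
  have h2 : ∑ x ∈ X, ((A.card : ℤ) ^ 2) ≤ 4 * ∑ x : F,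
      ∑ γ ∈ Finset.univ.filter (fun γ : F => γ ^ m = 1),
      ((m : ℤ) * (A.filter fun a => (a - x) ^ e = γ).card - A.card) ^ 2 := by
    rw [Finset.mul_sum]
    refine le_trans (Finset.sum_le_sum ?_) (Finset.sum_le_sum_of_subset_of_nonneg
      (Finset.subset_univ X) fun x _ _ => by positivity)
    intro x hx
    have hx' : 2 * (m : ℤ) * (A.filter fun a => (a - x) ^ e = γ).card < A.card := by
      exact_mod_cast (Finset.mem_filter.1 hx).2
    have h3 := Finset.single_le_sum
      (f := fun γ : F => ((m : ℤ) * (A.filter fun a => (a - x) ^ e = γ).card - A.card) ^ 2)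
      (s := Finset.univ.filter (fun γ : F => γ ^ m = 1)) (fun _ _ => sq_nonneg _)
      (Finset.mem_filter.2 ⟨Finset.mem_univ γ, hγ⟩)
    have h4 : (0 : ℤ) ≤ m * (A.filter fun a => (a - x) ^ e = γ).card := by positivity
    refine le_trans ?_ (mul_le_mul_of_nonneg_left h3 (by norm_num))
    nlinarith
  rw [Finset.sum_const, nsmul_eq_mul] at h2
  have h5 : (X.card * A.card * A.card : ℤ) ≤ 8 * m ^ 2 * Fintype.card F * A.card := by
    nlinarith
  have h6 : X.card * A.card * A.card ≤ 8 * m ^ 2 * Fintype.card F * A.card := by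
    exact_mod_cast h5
  exact Nat.le_of_mul_le_mul_right h6 hA

end Residues

/-- Greedy embedding: in a large field, points can be chosen from dense sets so that all their
differences lie in prescribed residue classes. -/
lemma exists_embedding (m : ℕ) (hm : 0 < m) (k : ℕ) : ∀ D : ℕ, ∃ P : ℕ,
    ∀ (F : Type) [Field F] [Fintype F] [DecidableEq F] (e : ℕ), 0 < e →
      Fintype.card F = m * e + 1 → P < Fintype.card F → ∀ (A : ℕ → Finset F) (γ : ℕ → ℕ → F),
      (∀ j < k, Fintype.card F ≤ D * (A j).card) → (∀ i j, γ i j ^ m = 1) →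
      ∃ b : ℕ → F, (∀ i < k, b i ∈ A i) ∧
        ∀ i j, i < j → j < k → (b j - b i) ^ e = γ i j := by
  induction k with
  | zero =>
    intro D
    refine ⟨0, fun F _ _ _ e _ _ _ A γ _ _ => ⟨0, by simp, by simp⟩⟩
  | succ k ih =>
    intro D
    obtain ⟨P, hP⟩ := ih (2 * m * D)
    refine ⟨P + D * (k * (8 * m ^ 2 * D)), fun F _ _ _ e he hq hlt A γ hA hγ => ?_⟩
    set bad : ℕ → Finset F := fun j => Finset.univ.filter fun x : F =>
      2 * m * ((A (j + 1)).filter fun a => (a - x) ^ e = γ 0 (j + 1)).card < (A (j + 1)).card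
      with hbad
    have hbadc : ∀ j ∈ Finset.range k, (bad j).card ≤ 8 * m ^ 2 * D := by
      intro j hj
      have h1 := card_bad_mul_le hm he hq (A (j + 1)) (hγ 0 (j + 1))
      have h2 := hA (j + 1) (by simpa using hj)
      have h3 : 0 < (A (j + 1)).card := by
        rcases Nat.eq_zero_or_pos (A (j + 1)).card with h | h
        · rw [h] at h2; omega
        · exact h
      refine Nat.le_of_mul_le_mul_right (h1.trans ?_) h3
      calc 8 * m ^ 2 * Fintype.card F ≤ 8 * m ^ 2 * (D * (A (j + 1)).card) := by gcongr
        _ = _ := by ring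
    have hU : ((Finset.range k).biUnion bad).card ≤ k * (8 * m ^ 2 * D) := by
      simpa using Finset.card_biUnion_le_card_mul _ _ _ hbadc
    have hlt0 : ((Finset.range k).biUnion bad).card < (A 0).card := by
      have h0 := hA 0 (Nat.succ_pos k)
      by_contra! hcon
      have : D * (A 0).card ≤ D * (k * (8 * m ^ 2 * D)) := by gcongr; exact hcon.trans hU
      omega
    obtain ⟨b0, hb0, hb0'⟩ := Finset.exists_mem_notMem_of_card_lt_card hlt0
    have hgood : ∀ j < k, (A (j + 1)).card ≤
        2 * m * ((A (j + 1)).filter fun a => (a - b0) ^ e = γ 0 (j + 1)).card := by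
      intro j hj
      by_contra! hcon
      exact hb0' (Finset.mem_biUnion.2 ⟨j, by simpa using hj, by simpa [hbad] using hcon⟩)
    obtain ⟨b, hb, hbb⟩ := hP F e he hq (by omega)
      (fun j => (A (j + 1)).filter fun a => (a - b0) ^ e = γ 0 (j + 1))
      (fun i j => γ (i + 1) (j + 1))
      (fun j hj => by
        have h1 := hA (j + 1) (by omega)
        have h2 := hgood j hj
        calc Fintype.card F ≤ D * (A (j + 1)).card := h1
          _ ≤ D * (2 * m * ((A (j + 1)).filter fun a => (a - b0) ^ e = γ 0 (j + 1)).card) := by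
            gcongr
          _ = _ := by ring)
      (fun i j => hγ _ _)
    refine ⟨fun | 0 => b0 | j + 1 => b j, ?_, ?_⟩
    · rintro (_ | i) hi
      · exact hb0
      · exact (Finset.mem_filter.1 (hb i (by omega))).1
    · rintro (_ | i) (_ | j) hij hj
      · omega
      · exact (Finset.mem_filter.1 (hb j (by omega))).2
      · omega
      · exact hbb i j (by omega) (by omega)

/-! ### A base block tiling the nonzero field elements -/

/-- Index pairs `i < j` of a base block of size `k`; they number `k.choose 2`. -/
abbrev IncPair (k : ℕ) : Type := {p : Fin k × Fin k // p.1 < p.2}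

/-- In a large field there is a base block whose increasing differences represent each residue
class of index `m` exactly once. -/
lemma exists_base_block (k : ℕ) (hk : 2 ≤ k) : ∃ P : ℕ,
    ∀ (F : Type) [Field F] [Fintype F] [DecidableEq F] (e : ℕ), 0 < e →
      Fintype.card F = Fintype.card (IncPair k) * e + 1 → P < Fintype.card F →
      ∃ b : Fin k → F, (∀ p : IncPair k, b p.1.2 - b p.1.1 ≠ 0) ∧
        ∀ c : F, c ≠ 0 → ∃! p : IncPair k, c ^ e = (b p.1.2 - b p.1.1) ^ e := by
  set m := Fintype.card (IncPair k) with hm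
  have hm0 : 0 < m := Fintype.card_pos_iff.2
    ⟨⟨(⟨0, by omega⟩, ⟨1, by omega⟩), by simp⟩⟩
  obtain ⟨P, hP⟩ := exists_embedding m hm0 k 1
  refine ⟨P, fun F _ _ _ e he hq hlt => ?_⟩
  set Γ := Finset.univ.filter (fun γ : F => γ ^ m = 1) with hΓ
  have hcl : ∀ y : F, y ≠ 0 → (y ^ e) ^ m = 1 := by
    intro y h
    rw [← pow_mul, mul_comm, show m * e = Fintype.card F - 1 by omega]
    exact FiniteField.pow_card_sub_one_eq_one y h
  -- The map `y ↦ y ^ e` sends the `m * e` nonzero elements to `Γ` with fibres of size at most `e`.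
  have hcard : Γ.card = m := by
    refine le_antisymm (card_pow_eq_one_le hm0) ?_
    have h1 : ((Finset.univ : Finset F).erase 0).card ≤ e * Γ.card := by
      refine Finset.card_le_mul_card_image_of_maps_to (f := fun y => y ^ e) ?_ e ?_
      · intro y hy
        simpa [hΓ] using hcl y (Finset.ne_of_mem_erase hy)
      · intro γ hγ
        by_cases hne : ∃ y : F, y ≠ 0 ∧ y ^ e = γ
        · obtain ⟨y, hy0, rfl⟩ := hne
          refine le_trans (Finset.card_le_card_of_injOn (fun x => x / y) ?_ ?_)
            (card_pow_eq_one_le (F := F) he)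
          · intro x hx
            have hx' : x ^ e = y ^ e := (Finset.mem_filter.1 (Finset.mem_coe.1 hx)).2
            simp [div_pow, hx', div_self (pow_ne_zero e hy0)]
          · intro x _ x' _ h
            exact (div_left_inj' hy0).1 h
        · rw [Finset.filter_eq_empty_iff.2]
          · simp
          · intro y hy h
            exact hne ⟨y, Finset.ne_of_mem_erase hy, h⟩
    rw [Finset.card_erase_of_mem (Finset.mem_univ _), Finset.card_univ, hq] at h1
    have h2 : e * m ≤ e * Γ.card := by rw [mul_comm e m]; simpa using h1
    exact Nat.le_of_mul_le_mul_left h2 he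
  have hequiv : Fintype.card (IncPair k) = Fintype.card Γ := by simp [hcard, hm]
  let φ : IncPair k ≃ Γ := Fintype.equivOfCardEq hequiv
  have hφ : ∀ p, ((φ p : Γ) : F) ^ m = 1 := fun p => (Finset.mem_filter.1 (φ p).2).2
  obtain ⟨b, -, hb⟩ := hP F e he hq hlt (fun _ => Finset.univ)
    (fun i j => if h : i < j ∧ j < k then φ ⟨(⟨i, h.1.trans h.2⟩, ⟨j, h.2⟩), h.1⟩ else 1)
    (fun _ _ => by simp) (fun i j => by
      split_ifs with h
      · exact hφ _
      · simp)
  have hb' : ∀ p : IncPair k, (b p.1.2 - b p.1.1) ^ e = φ p := by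
    rintro ⟨⟨i, j⟩, hij⟩
    have hij' : (i : ℕ) < j := hij
    rw [hb i j hij' j.2, dif_pos ⟨hij', j.2⟩]
  refine ⟨fun i => b i, fun p h0 => ?_, fun c hc => ?_⟩
  · have h1 := hb' p
    have h2 := hφ p
    rw [h0, zero_pow he.ne'] at h1
    rw [← h1, zero_pow hm0.ne'] at h2
    exact zero_ne_one h2
  · refine ⟨φ.symm ⟨c ^ e, Finset.mem_filter.2 ⟨Finset.mem_univ _, hcl c hc⟩⟩, ?_, ?_⟩
    · simp only [hb', Equiv.apply_symm_apply]
    · intro p hp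
      rw [hb'] at hp
      rw [Equiv.eq_symm_apply]
      exact Subtype.ext hp.symm

/-- A set `T` of multipliers, closed under multiplication by `n`-th roots of unity, such that the
differences of the base block tile `F \ {0}` by the translates of `T`. Here `T` consists of half of
the `m`-th power residues; the half is chosen by looking at `x ^ n`, which is possible because
`x ↦ x ^ n` forgets the `n`-th roots of unity but, `n` being odd, remembers the sign. -/
lemma exists_tiling (k : ℕ) (hk : 2 ≤ k) (n : ℕ) (hn : Odd n) : ∃ P : ℕ,
    ∀ (F : Type) [Field F] [Fintype F] [DecidableEq F] (e : ℕ), 0 < e → 2 ∣ e → n ∣ e →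
      Fintype.card F = Fintype.card (IncPair k) * e + 1 → P < Fintype.card F →
      ∃ (b : Fin k → F) (T : Set F), Function.Injective b ∧
        (∀ s x : F, s ^ n = 1 → x ∈ T → s * x ∈ T) ∧
        ∀ c : F, c ≠ 0 → ∃! p : Fin k × Fin k, p.1 ≠ p.2 ∧ (b p.2 - b p.1)⁻¹ * c ∈ T := by
  obtain ⟨P, hP⟩ := exists_base_block k hk
  refine ⟨P, fun F _ _ _ e he h2e hne hq hlt => ?_⟩
  obtain ⟨b, hb0, hb⟩ := hP F e he hq hlt
  have hne2 : ∀ x : F, x ≠ 0 → x ≠ -x := by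
    intro x hx h
    have h2 : (2 : F) = 0 := by
      have : 2 * x = 0 := by linear_combination h
      exact (mul_eq_zero.1 this).resolve_right hx
    have h3 : (Fintype.card F : F) = 0 := FiniteField.cast_card_eq_zero F
    obtain ⟨e', rfl⟩ := h2e
    rw [hq] at h3
    push_cast at h3
    rw [h2] at h3
    simp at h3
  have hneg : ∀ x : F, (-x) ^ e = x ^ e := fun x => (even_iff_two_dvd.2 h2e).neg_pow x
  let T : Set F := {x | x ^ e = 1 ∧ WellOrderingRel (x ^ n) (-x ^ n)}
  have hinj : Function.Injective b := by
    intro i j hij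
    by_contra hne
    rcases lt_or_gt_of_ne hne with h | h
    · exact hb0 ⟨(i, j), h⟩ (by simp [hij])
    · exact hb0 ⟨(j, i), h⟩ (by simp [hij])
  have hT1 : ∀ x : F, x ≠ 0 → x ^ e = 1 → (x ∈ T ∨ -x ∈ T) := by
    intro x hx hxe
    have h1 := hne2 (x ^ n) (pow_ne_zero n hx)
    rcases trichotomous_of WellOrderingRel (x ^ n) (-x ^ n) with h | h | h
    · exact Or.inl ⟨hxe, h⟩
    · exact absurd h h1
    · exact Or.inr ⟨by rw [hneg, hxe], by rw [hn.neg_pow, neg_neg]; exact h⟩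
  have hT2 : ∀ x : F, x ∈ T → -x ∈ T → False := by
    rintro x ⟨-, h1⟩ ⟨-, h2⟩
    rw [hn.neg_pow, neg_neg] at h2
    exact asymm_of WellOrderingRel h1 h2
  refine ⟨b, T, hinj, ?_, ?_⟩
  · rintro s x hs ⟨hx1, hx2⟩
    obtain ⟨e', rfl⟩ := hne
    refine ⟨?_, ?_⟩
    · rw [mul_pow, hx1, pow_mul, hs]; simp
    · rw [mul_pow, hs, one_mul]; exact hx2
  · intro c hc
    obtain ⟨⟨⟨i, j⟩, hij⟩, hp, huniq⟩ := hb c hc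
    have hij' : i < j := hij
    simp only at hp
    have hd : b j - b i ≠ 0 := hb0 ⟨(i, j), hij⟩
    have hxe : ((b j - b i)⁻¹ * c) ^ e = 1 := by
      rw [mul_pow, inv_pow, hp, inv_mul_cancel₀ (pow_ne_zero e hd)]
    have hx0 : (b j - b i)⁻¹ * c ≠ 0 := mul_ne_zero (inv_ne_zero hd) hc
    have hflip : ∀ i j, (b i - b j)⁻¹ * c = -((b j - b i)⁻¹ * c) := by
      intro i j
      rw [← neg_sub (b j), inv_neg, neg_mul]
    -- A pair realising `c` is, up to order, the pair `(i, j)` singled out by the class of `c`.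
    have hclass : ∀ i' j', i' ≠ j' → (b j' - b i')⁻¹ * c ∈ T →
        (i' = i ∧ j' = j) ∨ (i' = j ∧ j' = i) := by
      intro i' j' hne' hmem
      have hd' : b j' - b i' ≠ 0 := sub_ne_zero.2 fun h => hne' (hinj h).symm
      have h1 : c ^ e = (b j' - b i') ^ e := by
        have := hmem.1
        rw [mul_pow, inv_pow, inv_mul_eq_one₀ (pow_ne_zero e hd')] at this
        exact this.symm
      rcases lt_or_gt_of_ne hne' with h | h
      · have := huniq ⟨(i', j'), h⟩ h1
        simp only [Subtype.mk.injEq, Prod.mk.injEq] at this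
        exact Or.inl this
      · have := huniq ⟨(j', i'), h⟩ (by
          show c ^ e = (b i' - b j') ^ e
          rw [h1, ← hneg, neg_sub])
        simp only [Subtype.mk.injEq, Prod.mk.injEq] at this
        exact Or.inr this.symm
    rcases hT1 _ hx0 hxe with h | h
    · refine ⟨(i, j), ⟨hij'.ne, h⟩, ?_⟩
      rintro ⟨i', j'⟩ ⟨hne', hmem⟩
      rcases hclass i' j' hne' hmem with ⟨rfl, rfl⟩ | ⟨rfl, rfl⟩
      · rfl
      · simp only at hmem
        rw [hflip] at hmem
        exact (hT2 _ h hmem).elim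
    · rw [← hflip] at h
      refine ⟨(j, i), ⟨hij'.ne', h⟩, ?_⟩
      rintro ⟨i', j'⟩ ⟨hne', hmem⟩
      rcases hclass i' j' hne' hmem with ⟨rfl, rfl⟩ | ⟨rfl, rfl⟩
      · simp only at hmem
        rw [hflip] at h
        exact (hT2 _ hmem h).elim
      · rfl

/-! ### The design on a representation of the group -/

/-- An invariant set `W` of direction vectors: it meets the punctured line through each vector in
a translate of `T`, and the translates are chosen equivariantly. -/
lemma exists_directions {F V G : Type} [Field F] [AddCommGroup V] [Module F V] [Group G]
    [Fintype G] (ρ : Representation F G V) {k : ℕ} (b : Fin k → F) (T : Set F)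
    (hinj : Function.Injective b)
    (hT : ∀ s x : F, s ^ Fintype.card G = 1 → x ∈ T → s * x ∈ T)
    (htile : ∀ c : F, c ≠ 0 →
      ∃! p : Fin k × Fin k, p.1 ≠ p.2 ∧ (b p.2 - b p.1)⁻¹ * c ∈ T) :
    ∃ W : Set V, (∀ g, ∀ w ∈ W, ρ g w ∈ W) ∧ (∀ w ∈ W, w ≠ 0) ∧
      ∀ z : V, z ≠ 0 → ∃! p : Fin k × Fin k, p.1 ≠ p.2 ∧ (b p.2 - b p.1)⁻¹ • z ∈ W := by
  have hinvl : ∀ (g : G) (z : V), ρ g⁻¹ (ρ g z) = z := by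
    intro g z
    rw [← Module.End.mul_apply, ← map_mul]; simp
  let S : Setoid V :=
    { r := fun z z' => ∃ c : F, c ≠ 0 ∧ ∃ g : G, z' = c • ρ g z
      iseqv :=
        { refl := fun z => ⟨1, one_ne_zero, 1, by simp⟩
          symm := by
            rintro z z' ⟨c, hc, g, rfl⟩
            refine ⟨c⁻¹, inv_ne_zero hc, g⁻¹, ?_⟩
            rw [map_smul, hinvl, smul_smul, inv_mul_cancel₀ hc, one_smul]
          trans := by
            rintro z z' z'' ⟨c, hc, g, rfl⟩ ⟨c', hc', g', rfl⟩
            refine ⟨c' * c, mul_ne_zero hc' hc, g' * g, ?_⟩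
            rw [map_smul, smul_smul, map_mul, Module.End.mul_apply] } }
  -- `d z` represents the orbit of `z` under scalars and the group.
  let d : V → V := fun z => (Quotient.mk S z).out
  have hd : ∀ z, ∃ c : F, c ≠ 0 ∧ ∃ g : G, z = c • ρ g (d z) := fun z =>
    Quotient.exact (s := S) (Quotient.out_eq (Quotient.mk S z))
  have hdc : ∀ (c : F) (z : V), c ≠ 0 → d (c • z) = d z := by
    intro c z hc
    have : Quotient.mk S (c • z) = Quotient.mk S z :=
      (Quotient.sound (s := S) ⟨c, hc, 1, by simp⟩).symm
    simp only [d, this]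
  have hdg : ∀ (g : G) (z : V), d (ρ g z) = d z := by
    intro g z
    have : Quotient.mk S (ρ g z) = Quotient.mk S z :=
      (Quotient.sound (s := S) ⟨1, one_ne_zero, g, by simp⟩).symm
    simp only [d, this]
  refine ⟨{w | w ≠ 0 ∧ ∃ t ∈ T, ∃ g : G, w = t • ρ g (d w)}, ?_, fun w hw => hw.1, ?_⟩
  · rintro g w ⟨hw0, t, ht, h, hw⟩
    refine ⟨fun h0 => hw0 ?_, t, ht, g * h, ?_⟩
    · rw [← hinvl g w, h0, map_zero]
    · rw [hdg, map_mul, Module.End.mul_apply, ← map_smul, ← hw]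
  · intro z hz
    obtain ⟨c, hc, g, hzc⟩ := hd z
    have hd0 : d z ≠ 0 := by
      intro h0
      rw [h0, map_zero, smul_zero] at hzc
      exact hz hzc
    have key : ∀ p : Fin k × Fin k, (p.1 ≠ p.2 ∧ (b p.2 - b p.1)⁻¹ • z ∈
        {w | w ≠ 0 ∧ ∃ t ∈ T, ∃ g : G, w = t • ρ g (d w)}) ↔
        (p.1 ≠ p.2 ∧ (b p.2 - b p.1)⁻¹ * c ∈ T) := by
      rintro ⟨i, j⟩
      refine and_congr_right fun hne => ?_
      have hl : (b j - b i)⁻¹ ≠ 0 := inv_ne_zero (sub_ne_zero.2 fun h => hne (hinj h).symm)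
      show (b j - b i)⁻¹ • z ∈ _ ↔ (b j - b i)⁻¹ * c ∈ T
      generalize (b j - b i)⁻¹ = l at hl
      constructor
      · rintro ⟨-, t, ht, g', hw⟩
        rw [hdc _ _ hl] at hw
        have ht0 : t ≠ 0 := by
          rintro rfl
          rw [zero_smul] at hw
          exact (smul_ne_zero hl hz) hw
        -- `g'⁻¹ * g` scales the representative, by a scalar that is a root of unity.
        have h1 : ρ (g'⁻¹ * g) (d z) = ((l * c)⁻¹ * t) • d z := by
          have h2 : (l * c) • ρ g (d z) = t • ρ g' (d z) := by
            rw [mul_smul, ← hzc, hw]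
          have h3 : ρ g (d z) = ((l * c)⁻¹ * t) • ρ g' (d z) := by
            rw [mul_smul, ← h2, smul_smul, inv_mul_cancel₀ (mul_ne_zero hl hc), one_smul]
          rw [map_mul, Module.End.mul_apply, h3, map_smul, hinvl]
        have h4 : ∀ r : ℕ, ρ ((g'⁻¹ * g) ^ r) (d z) = ((l * c)⁻¹ * t) ^ r • d z := by
          intro r
          induction r with
          | zero => simp
          | succ r ih =>
            rw [pow_succ, map_mul, Module.End.mul_apply, h1, map_smul, ih, smul_smul, ← pow_succ']
        have h5 := h4 (Fintype.card G)
        rw [pow_card_eq_one, map_one, Module.End.one_apply] at h5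
        have h6 : ((l * c)⁻¹ * t) ^ Fintype.card G = 1 := by
          have h7 : (((l * c)⁻¹ * t) ^ Fintype.card G - 1) • d z = 0 := by
            rw [sub_smul, one_smul, ← h5, sub_self]
          exact sub_eq_zero.1 ((smul_eq_zero.1 h7).resolve_right hd0)
        have h8 := hT ((l * c)⁻¹ * t)⁻¹ t (by rw [inv_pow, h6, inv_one]) ht
        have hlc := mul_ne_zero hl hc
        rwa [show ((l * c)⁻¹ * t)⁻¹ * t = l * c by field_simp] at h8
      · intro h
        refine ⟨smul_ne_zero hl hz, l * c, h, g, ?_⟩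
        rw [hdc _ _ hl, mul_smul, ← hzc]
    simp_rw [key]
    exact htile c hc

/-- Translates of the base block along the directions in `W` form a design on which the group
acts. -/
lemma exists_design {F V G : Type} [Field F] [AddCommGroup V] [Module F V] [Group G]
    [Fintype V] [DecidableEq V] (ρ : Representation F G V) {k : ℕ} (b : Fin k → F)
    (hinj : Function.Injective b) (W : Set V) (hWG : ∀ g, ∀ w ∈ W, ρ g w ∈ W)
    (hW0 : ∀ w ∈ W, w ≠ 0)
    (hW : ∀ z : V, z ≠ 0 →
      ∃! p : Fin k × Fin k, p.1 ≠ p.2 ∧ (b p.2 - b p.1)⁻¹ • z ∈ W) :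
    ∃ D : Design V k, ∀ (g : G) (B : Finset V), B ∈ D.blocks → B.image (ρ g) ∈ D.blocks := by
  classical
  let blk : V → V → Finset V := fun u w => Finset.univ.image fun i => u + b i • w
  let blocks : Finset (Finset V) := Finset.univ.filter fun B => ∃ u, ∃ w ∈ W, B = blk u w
  have hmem : ∀ B, B ∈ blocks ↔ ∃ u, ∃ w ∈ W, B = blk u w := fun B => by simp [blocks]
  refine ⟨⟨blocks, ?_, ?_⟩, ?_⟩
  · intro B hB
    obtain ⟨u, w, hw, rfl⟩ := (hmem B).1 hB
    rw [Finset.card_image_of_injective, Finset.card_univ, Fintype.card_fin]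
    intro i j hij
    exact hinj (smul_left_injective F (hW0 w hw) (add_left_cancel hij))
  · intro x y hxy
    obtain ⟨⟨i, j⟩, ⟨hne, hw⟩, huniq⟩ := hW (y - x) (sub_ne_zero.2 hxy.symm)
    simp only at hne hw
    have hd : b j - b i ≠ 0 := sub_ne_zero.2 fun h => hne (hinj h).symm
    set w := (b j - b i)⁻¹ • (y - x) with hwdef
    have hyx : (b j - b i) • w = y - x := by
      rw [hwdef, smul_smul, mul_inv_cancel₀ hd, one_smul]
    refine ⟨blk (x - b i • w) w, ⟨(hmem _).2 ⟨_, w, hw, rfl⟩, ?_, ?_⟩, ?_⟩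
    · exact Finset.mem_image.2 ⟨i, Finset.mem_univ _, sub_add_cancel _ _⟩
    · refine Finset.mem_image.2 ⟨j, Finset.mem_univ _, ?_⟩
      rw [sub_smul] at hyx
      rw [sub_add_eq_add_sub, add_sub_assoc, hyx]
      abel
    · rintro B ⟨hB, hx, hy⟩
      obtain ⟨u', w', hw', rfl⟩ := (hmem B).1 hB
      obtain ⟨i', -, rfl⟩ := Finset.mem_image.1 hx
      obtain ⟨j', -, rfl⟩ := Finset.mem_image.1 hy
      have hne' : i' ≠ j' := fun h => hxy (by rw [h])
      have hd' : b j' - b i' ≠ 0 := sub_ne_zero.2 fun h => hne' (hinj h).symm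
      have hz : (u' + b j' • w') - (u' + b i' • w') = (b j' - b i') • w' := by
        rw [sub_smul]; abel
      have h1 := huniq (i', j') ⟨hne', by
        rw [hz, smul_smul, inv_mul_cancel₀ hd', one_smul]; exact hw'⟩
      simp only [Prod.mk.injEq] at h1
      obtain ⟨rfl, rfl⟩ := h1
      have h2 : w = w' := by
        rw [hwdef, hz, smul_smul, inv_mul_cancel₀ hd, one_smul]
      rw [h2, add_sub_cancel_right]
  · intro g B hB
    obtain ⟨u, w, hw, rfl⟩ := (hmem B).1 hB
    refine (hmem _).2 ⟨ρ g u, ρ g w, hWG g w hw, ?_⟩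
    simp only [blk, Finset.image_image]
    refine Finset.image_congr fun i _ => ?_
    simp [map_add, map_smul]

/-- Transport of a design along a bijection of the point sets. -/
def Design.transport {α β : Type} [DecidableEq α] [DecidableEq β] [Fintype β] {k : ℕ}
    (D : Design α k) (e : α ≃ β) : Design β k where
  blocks := Finset.univ.filter fun B => B.image e.symm ∈ D.blocks
  blockSize := by
    intro B hB
    rw [← D.blockSize _ (Finset.mem_filter.1 hB).2, Finset.card_image_of_injective _ e.symm.injective]
  pairCover := by
    intro x y hxy
    obtain ⟨B, ⟨hB, hx, hy⟩, huniq⟩ := D.pairCover (e.symm x) (e.symm y)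
      (fun h => hxy (e.symm.injective h))
    refine ⟨B.image e, ⟨?_, ?_, ?_⟩, ?_⟩
    · simpa [Finset.image_image] using hB
    · exact Finset.mem_image.2 ⟨_, hx, by simp⟩
    · exact Finset.mem_image.2 ⟨_, hy, by simp⟩
    · rintro C ⟨hC, hxC, hyC⟩
      rw [← huniq (C.image e.symm) ⟨(Finset.mem_filter.1 hC).2,
        Finset.mem_image_of_mem _ hxC, Finset.mem_image_of_mem _ hyC⟩]
      simp [Finset.image_image]

/-- Let `k ≥ 3` and let `G` be a finite group of odd order. Then there are
infinitely many `v` for which there is a `2`-`(v,k,1)` design whose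
automorphism group contains a subgroup isomorphic to `G`. -/
theorem statement4 (k : ℕ) (hk : 3 ≤ k) (G : Type) [Group G] [Fintype G]
    (hG : Odd (Fintype.card G)) :
    ∀ N : ℕ, ∃ v : ℕ, N < v ∧
      ∃ (D : Design (Fin v) k) (f : G →* Equiv.Perm (Fin v)),
        Function.Injective f ∧ ∀ g : G, IsAuto D (f g) := by
  intro N
  classical
  obtain ⟨P, hP⟩ := exists_tiling k (by omega) (Fintype.card G) hG
  set n := Fintype.card G with hn
  set m := Fintype.card (IncPair k) with hm
  have hm0 : 0 < m := Fintype.card_pos_iff.2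
    ⟨⟨(⟨0, by omega⟩, ⟨1, by omega⟩), by simp⟩⟩
  have hn0 : 0 < n := Fintype.card_pos
  obtain ⟨p, hp, hpgt, hpmod⟩ := Nat.exists_prime_gt_modEq_one (k := m * (2 * n)) (N + P)
    (by positivity)
  have : Fact p.Prime := ⟨hp⟩
  obtain ⟨r, hr⟩ := (Nat.modEq_iff_dvd' hp.one_lt.le).1 hpmod.symm
  have hp1 := hp.one_lt
  have hr0 : 0 < r := by
    rcases Nat.eq_zero_or_pos r with rfl | h
    · simp at hr; omega
    · exact h
  have hcardp : Fintype.card (ZMod p) = m * (2 * n * r) + 1 := by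
    rw [ZMod.card, ← mul_assoc, ← hr]; omega
  obtain ⟨b, T, hinj, hT, htile⟩ := hP (ZMod p) (2 * n * r) (by positivity)
    ⟨n * r, by ring⟩ ⟨2 * r, by ring⟩ hcardp (by rw [ZMod.card]; omega)
  let ρ : Representation (ZMod p) G (G → ZMod p) := TannakaDuality.FiniteGroup.leftRegular
  have hρ : ∀ (g : G) (f : G → ZMod p) (t : G), ρ g f t = f (g⁻¹ * t) := fun _ _ _ => rfl
  obtain ⟨W, hW1, hW2, hW3⟩ := exists_directions ρ b T hinj hT htile
  obtain ⟨D, hD⟩ := exists_design ρ b hinj W hW1 hW2 hW3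
  let e := Fintype.equivFin (G → ZMod p)
  have hinvl : ∀ (g : G) (z : G → ZMod p), ρ g⁻¹ (ρ g z) = z := by
    intro g z
    rw [← Module.End.mul_apply, ← map_mul]; simp
  have hinvr : ∀ (g : G) (z : G → ZMod p), ρ g (ρ g⁻¹ z) = z := by
    intro g z
    rw [← Module.End.mul_apply, ← map_mul]; simp
  let f : G →* Equiv.Perm (Fin (Fintype.card (G → ZMod p))) :=
    { toFun := fun g =>
        { toFun := fun x => e (ρ g (e.symm x))
          invFun := fun x => e (ρ g⁻¹ (e.symm x))
          left_inv := fun x => by simp [hinvl]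
          right_inv := fun x => by simp [hinvr] }
      map_one' := by ext x; simp
      map_mul' := fun g h => by ext x; simp }
  have hf : ∀ g x, f g x = e (ρ g (e.symm x)) := fun _ _ => rfl
  refine ⟨_, ?_, D.transport e, f, ?_, ?_⟩
  · rw [Fintype.card_fun, ZMod.card]
    exact lt_of_lt_of_le (by omega) (Nat.le_self_pow hn0.ne' p)
  · intro g h hgh
    have h1 : ρ g (Pi.single 1 1) = ρ h (Pi.single 1 1) := by
      have := congrArg (fun σ => e.symm (σ (e (Pi.single 1 1)))) hgh
      simpa [hf] using this
    have h2 := congrFun h1 g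
    rw [hρ, hρ, inv_mul_cancel, Pi.single_eq_same] at h2
    by_contra hne
    rw [Pi.single_eq_of_ne (fun h3 => hne (inv_mul_eq_one.1 h3).symm)] at h2
    exact one_ne_zero h2
  · have hmap : ∀ g B, B ∈ (D.transport e).blocks → B.image (f g) ∈ (D.transport e).blocks := by
      intro g B hB
      have h1 := hD g _ (Finset.mem_filter.1 hB).2
      refine Finset.mem_filter.2 ⟨Finset.mem_univ _, ?_⟩
      rw [Finset.image_image] at h1 ⊢
      convert h1 using 2
      funext x
      simp [hf]
    intro g B
    refine ⟨hmap g B, fun h => ?_⟩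
    have h1 := hmap g⁻¹ _ h
    rw [Finset.image_image] at h1
    have h2 : (f g⁻¹ : Fin _ → Fin _) ∘ f g = id := by
      funext x; simp
    rwa [h2, Finset.image_id] at h1
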